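/- Let W₁ ⊆ ℝ^d be a convex body with B_r^d ⊆ W₁ ⊆ B_R^d for some 0 < r ≤ R < ∞, set W_ρ = ρW₁, and let μ be a finite Borel measure on ℝ^d. Then (1/|W_ρ|) ∫_{ℝ^d} μ(W_ρ − x)² dx → μ(ℝ^d)² as ρ → ∞. -/

import Mathlib

open MeasureTheory
open scoped Pointwise

theorem stmt4_upper {d : ℕ} (W : Set (EuclideanSpace ℝ (Fin d))) (hW : MeasurableSet W)
    (μ : Measure (EuclideanSpace ℝ (Fin d))) [IsFiniteMeasure μ] :
    (∫⁻ x, (μ {y | y + x ∈ W}) ^ 2) ≤ (μ Set.univ) ^ 2 * volume W := by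
  have hS : MeasurableSet {p : EuclideanSpace ℝ (Fin d) × EuclideanSpace ℝ (Fin d) |
      p.2 + p.1 ∈ W} := (measurable_snd.add measurable_fst) hW
  have h1 : (∫⁻ x, μ {y | y + x ∈ W}) = volume W * μ Set.univ := by
    have a := Measure.prod_apply (μ := (volume : Measure (EuclideanSpace ℝ (Fin d)))) (ν := μ) hS
    have b := Measure.prod_apply_symm (μ := (volume : Measure (EuclideanSpace ℝ (Fin d))))
      (ν := μ) hS
    have c : ∀ y : EuclideanSpace ℝ (Fin d), volume ((fun x => (x, y)) ⁻¹'
        {p : EuclideanSpace ℝ (Fin d) × EuclideanSpace ℝ (Fin d) | p.2 + p.1 ∈ W})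
        = volume W := fun y => measure_preimage_add volume y W
    simp only [c, lintegral_const] at b
    rw [← b, a]
    rfl
  calc (∫⁻ x, (μ {y | y + x ∈ W}) ^ 2) ≤ ∫⁻ x, μ Set.univ * μ {y | y + x ∈ W} := by
        refine lintegral_mono fun x => ?_
        rw [sq]
        gcongr
        exact Set.subset_univ _
    _ = μ Set.univ * ∫⁻ x, μ {y | y + x ∈ W} :=
        lintegral_const_mul' _ _ (measure_ne_top _ _)
    _ = _ := by rw [h1]; ring

theorem stmt4_lower {d : ℕ} (r ρ t : ℝ) (hρ : 0 < ρ) (ht : 0 < t) (ht1 : t ≤ 1)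
    (W₁ : Set (EuclideanSpace ℝ (Fin d))) (hconv : Convex ℝ W₁) (hcomp : IsCompact W₁)
    (hball₁ : Metric.closedBall 0 r ⊆ W₁)
    (μ : Measure (EuclideanSpace ℝ (Fin d))) :
    (μ (Metric.closedBall 0 (t * ρ * r))) ^ 2 * (ENNReal.ofReal ((1 - t) ^ d) * volume (ρ • W₁))
      ≤ (∫⁻ x, (μ {y | y + x ∈ ρ • W₁}) ^ 2) := by
  have hv : volume ((1 - t) • (ρ • W₁)) = ENNReal.ofReal ((1 - t) ^ d) * volume (ρ • W₁) := by
    rw [Measure.addHaar_smul, finrank_euclideanSpace_fin,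
      abs_of_nonneg (pow_nonneg (by linarith) _)]
  rw [← hv, ← setLIntegral_const]
  refine le_trans ?_ (setLIntegral_le_lintegral ((1 - t) • (ρ • W₁)) _)
  refine setLIntegral_mono' ((hcomp.smul ρ).smul (1 - t)).measurableSet ?_
  rintro x ⟨_, ⟨w, hw, rfl⟩, rfl⟩
  gcongr
  intro y hy
  have htρ : 0 < t * ρ := by positivity
  have hy' : (t * ρ)⁻¹ • y ∈ W₁ := by
    apply hball₁
    rw [mem_closedBall_zero_iff] at hy ⊢
    rw [norm_smul, norm_inv, Real.norm_of_nonneg htρ.le, inv_mul_le_iff₀ htρ]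
    exact hy
  refine ⟨t • ((t * ρ)⁻¹ • y) + (1 - t) • w,
    hconv hy' hw ht.le (by linarith) (by ring), ?_⟩
  simp only [smul_add, smul_smul]
  congr 1
  · rw [show ρ * (t * (t * ρ)⁻¹) = 1 by field_simp, one_smul]
  · rw [mul_comm]

theorem stmt4 (d : ℕ) (r R : ℝ) (hr : 0 < r) (hrR : r ≤ R)
    (W₁ : Set (EuclideanSpace ℝ (Fin d))) (hconv : Convex ℝ W₁) (hcomp : IsCompact W₁)
    (hball₁ : Metric.closedBall 0 r ⊆ W₁) (hball₂ : W₁ ⊆ Metric.closedBall 0 R)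
    (μ : Measure (EuclideanSpace ℝ (Fin d))) [IsFiniteMeasure μ] :
    Filter.Tendsto
      (fun ρ : ℝ => (∫⁻ x, (μ {y | y + x ∈ ρ • W₁}) ^ 2) / volume (ρ • W₁))
      Filter.atTop (nhds ((μ Set.univ) ^ 2)) := by
  have hpos : ∀ ρ : ℝ, 0 < ρ → volume (ρ • W₁) ≠ 0 := by
    intro ρ hρ
    rw [Measure.addHaar_smul]
    refine mul_ne_zero ?_ ?_
    · rw [ne_eq, ENNReal.ofReal_eq_zero, not_le]
      positivity
    · exact ((Metric.measure_closedBall_pos volume 0 hr).trans_le (measure_mono hball₁)).ne'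
  have hfin : ∀ ρ : ℝ, volume (ρ • W₁) ≠ ⊤ := fun ρ => (hcomp.smul ρ).measure_lt_top.ne
  have hball : Filter.Tendsto
      (fun ρ : ℝ => μ (Metric.closedBall (0 : EuclideanSpace ℝ (Fin d)) ρ))
      Filter.atTop (nhds (μ Set.univ)) := by
    have := tendsto_measure_iUnion_atTop (μ := μ)
      (s := fun ρ : ℝ => Metric.closedBall (0 : EuclideanSpace ℝ (Fin d)) ρ)
      (fun a b h => Metric.closedBall_subset_closedBall h)
    have hu : (⋃ ρ : ℝ, Metric.closedBall (0 : EuclideanSpace ℝ (Fin d)) ρ) = Set.univ :=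
      Set.eq_univ_of_forall fun x => Set.mem_iUnion.2 ⟨‖x‖, by simp⟩
    rwa [hu] at this
  have hs : Filter.Tendsto (fun ρ : ℝ => (√ρ)⁻¹ * ρ * r) Filter.atTop Filter.atTop := by
    have : (fun ρ : ℝ => (√ρ)⁻¹ * ρ * r) = fun ρ => √ρ * r := by
      funext ρ
      rw [inv_mul_eq_div, Real.div_sqrt]
    rw [this]
    exact Real.tendsto_sqrt_atTop.atTop_mul_const hr
  have hc : Filter.Tendsto (fun ρ : ℝ => ENNReal.ofReal ((1 - (√ρ)⁻¹) ^ d))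
      Filter.atTop (nhds 1) := by
    have h0 : Filter.Tendsto (fun ρ : ℝ => (1 - (√ρ)⁻¹) ^ d) Filter.atTop
        (nhds ((1 - 0) ^ d)) :=
      (tendsto_const_nhds.sub (tendsto_inv_atTop_zero.comp Real.tendsto_sqrt_atTop)).pow d
    have := ENNReal.tendsto_ofReal h0
    simpa using this
  have hlow : Filter.Tendsto (fun ρ : ℝ =>
      (μ (Metric.closedBall (0 : EuclideanSpace ℝ (Fin d)) ((√ρ)⁻¹ * ρ * r))) ^ 2 *
        ENNReal.ofReal ((1 - (√ρ)⁻¹) ^ d)) Filter.atTop (nhds ((μ Set.univ) ^ 2)) := by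
    have h2 := ((ENNReal.continuous_pow 2).tendsto _).comp (hball.comp hs)
    have := ENNReal.Tendsto.mul h2 (Or.inr ENNReal.one_ne_top) hc
      (Or.inr (ENNReal.pow_ne_top (measure_ne_top μ _)))
    simpa using this
  refine tendsto_of_tendsto_of_tendsto_of_le_of_le' hlow tendsto_const_nhds ?_ ?_
  · filter_upwards [Filter.eventually_ge_atTop (1 : ℝ)] with ρ hρ
    have hρ0 : 0 < ρ := by linarith
    rw [ENNReal.le_div_iff_mul_le (Or.inl (hpos ρ hρ0)) (Or.inl (hfin ρ)), mul_assoc]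
    exact stmt4_lower r ρ (√ρ)⁻¹ hρ0 (by positivity)
      (inv_le_one_of_one_le₀ (Real.one_le_sqrt.2 hρ)) W₁ hconv hcomp hball₁ μ
  · filter_upwards with ρ
    exact ENNReal.div_le_of_le_mul (stmt4_upper _ (hcomp.smul ρ).measurableSet μ)
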